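/- arXiv:2105.12062 — 2 statements merged into one kernel-verified Lean document; each statement's English description precedes it below -/
import Mathlib

section
/- Let f : ℝ^d → ℝ be L-smooth and convex (L > 0). Run gradient-related iterations x_{k+1} = x_k - (1/L)∇f(x_k) - (2θ_{k+1}³ - θ_{k+1}²)v_{k+1}, v_{k+1} = v_k + (1/(Lθ_kθ_{k+1}²))∇f(x_k), with v_0 = 0, θ_N = 1, θ_k² - θ_k = θ_{k+1}². Then ‖∇f(x_N)‖² ≤ 8L(f(x_0) - f(x⋆))/(N+2)², where x⋆ is any minimizer of f. -/
open scoped RealInnerProductSpace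

/-- Descent lemma. -/
lemma ogm_descent {E : Type*} [NormedAddCommGroup E] [InnerProductSpace ℝ E] [CompleteSpace E]
    (L : ℝ) (f : E → ℝ) (hdiff : Differentiable ℝ f)
    (hlip : ∀ x y, ‖gradient f x - gradient f y‖ ≤ L * ‖x - y‖) (x d : E) :
    f (x + d) ≤ f x + ⟪gradient f x, d⟫ + L / 2 * ‖d‖ ^ 2 := by
  have hd : ∀ t : ℝ, HasDerivAt
      (fun t : ℝ => f (x + t • d) - t * ⟪gradient f x, d⟫ - L / 2 * t ^ 2 * ‖d‖ ^ 2)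
      (⟪gradient f (x + t • d), d⟫ - ⟪gradient f x, d⟫ - L * t * ‖d‖ ^ 2) t := by
    intro t
    have h1 : HasDerivAt (fun t : ℝ => x + t • d) d t := by
      simpa using ((hasDerivAt_id t).smul_const d).const_add x
    have h2 := (hdiff (x + t • d)).hasGradientAt.hasFDerivAt.comp_hasDerivAt t h1
    have h3 : HasDerivAt (fun t : ℝ => t * ⟪gradient f x, d⟫) (⟪gradient f x, d⟫) t := by
      simpa using (hasDerivAt_id t).mul_const (⟪gradient f x, d⟫)
    have h4 : HasDerivAt (fun t : ℝ => L / 2 * t ^ 2 * ‖d‖ ^ 2) (L * t * ‖d‖ ^ 2) t := by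
      have := (((hasDerivAt_id t).pow 2).const_mul (L / 2)).mul_const (‖d‖ ^ 2)
      refine this.congr_deriv ?_
      simp only [id]; ring
    have h5 := (h2.sub h3).sub h4
    exact h5
  have hanti : AntitoneOn
      (fun t : ℝ => f (x + t • d) - t * ⟪gradient f x, d⟫ - L / 2 * t ^ 2 * ‖d‖ ^ 2)
      (Set.Icc 0 1) := by
    apply antitoneOn_of_deriv_nonpos (convex_Icc 0 1)
    · exact fun t _ => (hd t).continuousAt.continuousWithinAt
    · exact fun t _ => (hd t).differentiableAt.differentiableWithinAt
    · intro t ht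
      rw [interior_Icc] at ht
      rw [(hd t).deriv, ← inner_sub_left]
      have h1 := real_inner_le_norm (gradient f (x + t • d) - gradient f x) d
      have h2 := hlip (x + t • d) x
      rw [add_sub_cancel_left, norm_smul, Real.norm_of_nonneg ht.1.le] at h2
      nlinarith [mul_le_mul_of_nonneg_right h2 (norm_nonneg d)]
  have := hanti (by simp : (0 : ℝ) ∈ Set.Icc (0 : ℝ) 1) (by simp : (1 : ℝ) ∈ Set.Icc (0 : ℝ) 1)
    zero_le_one
  simp only [one_smul, zero_smul, add_zero] at this
  linarith

/-- First-order convexity inequality. -/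
lemma ogm_convex {E : Type*} [NormedAddCommGroup E] [InnerProductSpace ℝ E] [CompleteSpace E]
    (f : E → ℝ) (hdiff : Differentiable ℝ f) (hconv : ConvexOn ℝ Set.univ f) (x d : E) :
    f x + ⟪gradient f x, d⟫ ≤ f (x + d) := by
  have h1 : HasDerivAt (fun t : ℝ => x + t • d) d 0 := by
    simpa using ((hasDerivAt_id (0 : ℝ)).smul_const d).const_add x
  have h2 := (hdiff (x + (0 : ℝ) • d)).hasGradientAt.hasFDerivAt.comp_hasDerivAt 0 h1
  have hc : ConvexOn ℝ Set.univ (fun t : ℝ => f (x + t • d)) := by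
    have := hconv.comp_affineMap (AffineMap.lineMap x (x + d) : ℝ →ᵃ[ℝ] E)
    simp only [Set.preimage_univ] at this
    have e : (fun t : ℝ => f (x + t • d))
        = f ∘ (AffineMap.lineMap x (x + d) : ℝ →ᵃ[ℝ] E) := by
      funext t
      simp [AffineMap.lineMap_apply, add_comm]
    rw [e]; exact this
  have := hc.le_slope_of_hasDerivAt (Set.mem_univ 0) (Set.mem_univ 1) zero_lt_one h2
  simp only [slope_def_field, one_smul, zero_smul, add_zero, sub_zero, div_one,
    InnerProductSpace.toDual_apply_apply] at this
  linarith

/-- Interpolation inequality. -/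
lemma ogm_interp {E : Type*} [NormedAddCommGroup E] [InnerProductSpace ℝ E] [CompleteSpace E]
    (L : ℝ) (hL : 0 < L) (f : E → ℝ) (hdiff : Differentiable ℝ f)
    (hconv : ConvexOn ℝ Set.univ f)
    (hlip : ∀ x y, ‖gradient f x - gradient f y‖ ≤ L * ‖x - y‖) (a b : E) :
    f b / L + ⟪(1 / L) • gradient f b, a - b⟫
      + 1 / 2 * ‖(1 / L) • gradient f a - (1 / L) • gradient f b‖ ^ 2 ≤ f a / L := by
  set A := (1 / L) • gradient f a with hA
  set B := (1 / L) • gradient f b with hB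
  have hA' : gradient f a = L • A := by rw [hA, smul_smul]; field_simp; simp
  have hB' : gradient f b = L • B := by rw [hB, smul_smul]; field_simp; simp
  have h1 := ogm_descent L f hdiff hlip a (-(A - B))
  have h2 := ogm_convex f hdiff hconv b (a - b - (A - B))
  have e : b + (a - b - (A - B)) = a + -(A - B) := by abel
  rw [e] at h2
  rw [hA', inner_smul_left] at h1
  rw [hB', inner_smul_left] at h2
  rw [inner_neg_right, norm_neg] at h1
  rw [inner_sub_right] at h2
  simp only [conj_trivial] at h1 h2
  have h3 : ‖A - B‖ ^ 2 = ⟪A, A - B⟫ - ⟪B, A - B⟫ := by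
    rw [← inner_sub_left, real_inner_self_eq_norm_sq]
  rw [le_div_iff₀ hL]
  have : f b / L * L = f b := by field_simp
  have h4 : L * ‖A - B‖ ^ 2 = L * (⟪A, A - B⟫ - ⟪B, A - B⟫) := by rw [h3]
  nlinarith

/-- One step of the potential argument. -/
lemma ogm_step {E : Type*} [NormedAddCommGroup E] [InnerProductSpace ℝ E]
    (t e F0 Fa Fb Fn K : ℝ) (ht : 0 < t) (he : 0 < e) (hte : t ^ 2 = t + e ^ 2)
    (A B C U V xa xb xn : E)
    (hV : V = U + (1 / (t * e ^ 2)) • A)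
    (hx : xb = xa - A - (2 * e ^ 3 - e ^ 2) • V)
    (i1 : Fb + ⟪B, xa - xb⟫ + 1 / 2 * ‖A - B‖ ^ 2 ≤ Fa)
    (i2 : Fa + ⟪A, xn - xa⟫ + 1 / 2 * ‖C - A‖ ^ 2 ≤ Fn)
    (ih : 1 / 2 * (1 / t ^ 2 - K) * ‖C‖ ^ 2 - ⟪C, U⟫ + ⟪U, xn - xa⟫
      + t ^ 2 * (t - 1) ^ 2 * ‖U‖ ^ 2 + (2 * t - 1) * ⟪A, U⟫ + 1 / 2 * (1 / t ^ 2) * ‖A‖ ^ 2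
      ≤ F0 - 1 / t ^ 2 * Fa + (1 / t ^ 2 - K) * Fn) :
    1 / 2 * (1 / e ^ 2 - K) * ‖C‖ ^ 2 - ⟪C, V⟫ + ⟪V, xn - xb⟫
      + e ^ 2 * (e - 1) ^ 2 * ‖V‖ ^ 2 + (2 * e - 1) * ⟪B, V⟫ + 1 / 2 * (1 / e ^ 2) * ‖B‖ ^ 2
      ≤ F0 - 1 / e ^ 2 * Fb + (1 / e ^ 2 - K) * Fn := by
  have hw : 1 / (t * e ^ 2) = 1 / e ^ 2 - 1 / t ^ 2 := by
    field_simp; linarith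
  have hwpos : 0 < 1 / (t * e ^ 2) := by positivity
  have hppos : 0 < 1 / e ^ 2 := by positivity
  have j1 := mul_le_mul_of_nonneg_left i1 hppos.le
  have j2 := mul_le_mul_of_nonneg_left i2 hwpos.le
  have hxb : xa - xb = A + (2 * e ^ 3 - e ^ 2) • V := by rw [hx]; abel
  have hxn : xn - xb = (xn - xa) + A + (2 * e ^ 3 - e ^ 2) • V := by rw [hx]; abel
  rw [hxb] at j1
  rw [hxn]
  generalize xn - xa = y at *
  clear i1 i2 hx hxb hxn
  subst hV
  simp only [← real_inner_self_eq_norm_sq, inner_add_left, inner_add_right, inner_sub_left,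
    inner_sub_right, real_inner_smul_left, real_inner_smul_right] at *
  have c1 := real_inner_comm A B
  have c2 := real_inner_comm A C
  have c3 := real_inner_comm A U
  rw [c2] at j2
  rw [c2, c3]
  rw [← c1] at j1
  have hq : 1 / t ^ 2 = 1 / e ^ 2 - 1 / (t * e ^ 2) := by linarith
  have k1 : 1 / (t * e ^ 2) * e ^ 4 = t - 1 := by
    field_simp; linarith
  have k2 : (1 / (t * e ^ 2)) ^ 2 * e ^ 4 = 1 / t ^ 2 := by
    field_simp
  have k3 : 1 / e ^ 2 * (2 * e ^ 3 - e ^ 2) = 2 * e - 1 := by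
    field_simp
  have k4 : e ^ 4 = t ^ 2 * (t - 1) ^ 2 := by
    have : e ^ 2 = t * (t - 1) := by linarith
    calc e ^ 4 = (e ^ 2) ^ 2 := by ring
      _ = _ := by rw [this]; ring
  rw [hq] at k2 ih
  generalize 1 / (t * e ^ 2) = w at *
  generalize 1 / e ^ 2 = p at *
  linear_combination j1 + j2 + ih + 2 * ⟪A, U⟫ * k1 + ⟪A, A⟫ * k2
    - (⟪B, U⟫ + w * ⟪B, A⟫) * k3 + ⟪U, U⟫ * k4

theorem stmt_7 {d : ℕ} (L : ℝ) (hL : 0 < L) (N : ℕ)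
    (f : EuclideanSpace ℝ (Fin d) → ℝ)
    (hdiff : Differentiable ℝ f) (hconv : ConvexOn ℝ Set.univ f)
    (hlip : ∀ x y, ‖gradient f x - gradient f y‖ ≤ L * ‖x - y‖)
    (xs : EuclideanSpace ℝ (Fin d)) (hmin : ∀ y, f xs ≤ f y)
    (θ : ℕ → ℝ) (hθN : θ N = 1)
    (hθ : ∀ k < N, θ k = (1 + Real.sqrt (1 + 4 * θ (k + 1) ^ 2)) / 2)
    (x v : ℕ → EuclideanSpace ℝ (Fin d)) (hv0 : v 0 = 0)
    (hv : ∀ k < N, v (k + 1) = v k + (1 / (L * θ k * θ (k + 1) ^ 2)) • gradient f (x k))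
    (hx : ∀ k < N, x (k + 1) = x k - (1 / L) • gradient f (x k)
        - (2 * θ (k + 1) ^ 3 - θ (k + 1) ^ 2) • v (k + 1)) :
    ‖gradient f (x N)‖ ^ 2 ≤ 8 * L * (f (x 0) - f xs) / ((N : ℝ) + 2) ^ 2 := by
  have hpos : ∀ m ≤ N, ((m : ℝ) + 2) / 2 ≤ θ (N - m) := by
    intro m
    induction m with
    | zero => intro _; simp [hθN]
    | succ m ih =>
      intro hm
      have h1 := ih (by omega)
      have h2 := hθ (N - (m + 1)) (by omega)
      rw [show N - (m + 1) + 1 = N - m by omega] at h2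
      have hp : 0 ≤ θ (N - m) := le_trans (by positivity) h1
      have h3 : 2 * θ (N - m) ≤ Real.sqrt (1 + 4 * θ (N - m) ^ 2) :=
        Real.le_sqrt_of_sq_le (by nlinarith)
      rw [h2]
      push_cast
      linarith
  have hθpos : ∀ k ≤ N, 0 < θ k := by
    intro k hk
    have := hpos (N - k) (by omega)
    rw [show N - (N - k) = k by omega] at this
    exact lt_of_lt_of_le (by positivity) this
  have hθsq : ∀ k < N, θ k ^ 2 = θ k + θ (k + 1) ^ 2 := by
    intro k hk
    have h := hθ k hk
    have hs : Real.sqrt (1 + 4 * θ (k + 1) ^ 2) ^ 2 = 1 + 4 * θ (k + 1) ^ 2 :=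
      Real.sq_sqrt (by positivity)
    rw [h]
    linear_combination (1 / 4) * hs
  have hint := ogm_interp L hL f hdiff hconv hlip
  have hstar : ∀ a, f xs / L + 1 / 2 * ‖(1 / L) • gradient f a‖ ^ 2 ≤ f a / L := by
    intro a
    have hg : gradient f xs = 0 := by
      have : IsLocalMin f xs := Filter.Eventually.of_forall hmin
      rw [gradient, this.fderiv_eq_zero, map_zero]
    have := hint a xs
    simpa [hg] using this
  have inv : ∀ n ≤ N,
      1 / 2 * (1 / θ n ^ 2 - 1 / θ 0 ^ 2) * ‖(1 / L) • gradient f (x N)‖ ^ 2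
      - ⟪(1 / L) • gradient f (x N), v n⟫ + ⟪v n, x N - x n⟫
      + θ n ^ 2 * (θ n - 1) ^ 2 * ‖v n‖ ^ 2 + (2 * θ n - 1) * ⟪(1 / L) • gradient f (x n), v n⟫
      + 1 / 2 * (1 / θ n ^ 2) * ‖(1 / L) • gradient f (x n)‖ ^ 2
      ≤ (1 / θ 0 ^ 2 * (f (x 0) / L) + 1 / 2 * (1 / θ 0 ^ 2) * ‖(1 / L) • gradient f (x 0)‖ ^ 2)
        - 1 / θ n ^ 2 * (f (x n) / L) + (1 / θ n ^ 2 - 1 / θ 0 ^ 2) * (f (x N) / L) := by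
    intro n
    induction n with
    | zero =>
      intro _
      rw [hv0]
      simp only [inner_zero_right, inner_zero_left, norm_zero]
      apply le_of_eq
      ring
    | succ k ih =>
      intro hk
      refine ogm_step (θ k) (θ (k + 1)) _ (f (x k) / L) _ _ _ (hθpos k (by omega))
        (hθpos (k + 1) hk) (hθsq k hk) ((1 / L) • gradient f (x k)) _ _ (v k) _ (x k) _ _ ?_
        (hx k hk) (hint _ _) (hint _ _) (ih (by omega))
      rw [hv k hk, smul_smul]
      congr 2
      field_simp
  have hN := inv N le_rfl
  rw [hθN] at hN
  simp only [sub_self, inner_zero_right] at hN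
  have s0 := hstar (x 0)
  have sN := hstar (x N)
  have h0 := hpos N le_rfl
  rw [Nat.sub_self] at h0
  have hq0 : 0 < 1 / θ 0 ^ 2 := by have := hθpos 0 (by omega); positivity
  have hq1 : 1 / θ 0 ^ 2 ≤ 4 / ((N : ℝ) + 2) ^ 2 := by
    have hp : (0 : ℝ) < ((N : ℝ) + 2) / 2 := by positivity
    calc 1 / θ 0 ^ 2 ≤ 1 / (((N : ℝ) + 2) / 2) ^ 2 := by gcongr
      _ = _ := by field_simp; norm_num
  have m0 := mul_le_mul_of_nonneg_left s0 hq0.le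
  have mN := mul_le_mul_of_nonneg_left sN hq0.le
  have hfin : ‖(1 / L) • gradient f (x N)‖ ^ 2
      ≤ 2 * (1 / θ 0 ^ 2) * (f (x 0) / L - f xs / L) := by
    nlinarith
  rw [norm_smul, mul_pow, Real.norm_of_nonneg (by positivity)] at hfin
  have hD : 0 ≤ f (x 0) - f xs := sub_nonneg.2 (hmin _)
  have h7 : ‖gradient f (x N)‖ ^ 2 ≤ 2 * (1 / θ 0 ^ 2) * L * (f (x 0) - f xs) := by
    have := mul_le_mul_of_nonneg_left hfin (sq_nonneg L)
    have e1 : L ^ 2 * ((1 / L) ^ 2 * ‖gradient f (x N)‖ ^ 2) = ‖gradient f (x N)‖ ^ 2 := by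
      field_simp
    have e2 : L ^ 2 * (2 * (1 / θ 0 ^ 2) * (f (x 0) / L - f xs / L))
        = 2 * (1 / θ 0 ^ 2) * L * (f (x 0) - f xs) := by
      field_simp
    linarith
  calc ‖gradient f (x N)‖ ^ 2 ≤ 2 * (1 / θ 0 ^ 2) * L * (f (x 0) - f xs) := h7
    _ ≤ 2 * (4 / ((N : ℝ) + 2) ^ 2) * L * (f (x 0) - f xs) := by gcongr
    _ = _ := by ring
end

section
/- Let f : ℝ^d → ℝ be L-smooth and convex with minimizer x⋆. Run the M-OGM-G iterations: v_0 = 0, v_{k+1} = v_k + (12/(L(N-k+1)(N-k+2)(N-k+3)))∇f(x_k), x_{k+1} = x_k - (1/L)∇f(x_k) - ((N-k)(N-k+1)(N-k+2)/6)v_{k+1}, for k = 0,...,N-1. Then with δ_{k+1} = 12/((N-k+1)(N-k+2)(N-k+3)), one has ∑_{k=0}^{N} (δ_{k+1}/2)‖∇f(x_k)‖² ≤ 12L(f(x_0) - f(x⋆))/((N+2)(N+3)). -/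
section helpers

variable {E : Type*} [NormedAddCommGroup E] [InnerProductSpace ℝ E] [CompleteSpace E]

lemma line_deriv (f : E → ℝ) (hdiff : Differentiable ℝ f) (x d : E) (t : ℝ) :
    HasDerivAt (fun s : ℝ => f (x + s • d)) (inner ℝ (gradient f (x + t • d)) d) t := by
  have h1 : HasFDerivAt f (fderiv ℝ f (x + t • d)) (x + t • d) := (hdiff _).hasFDerivAt
  have h2 : HasDerivAt (fun s : ℝ => x + s • d) d t := by
    simpa using ((hasDerivAt_id t).smul_const d).const_add x
  have h3 := h1.comp_hasDerivAt t h2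
  have h4 : inner ℝ (gradient f (x + t • d)) d = fderiv ℝ f (x + t • d) d := by
    simp [gradient]
  rw [h4]
  exact h3

lemma descent (L : ℝ) (f : E → ℝ) (hdiff : Differentiable ℝ f)
    (hlip : ∀ x y, ‖gradient f x - gradient f y‖ ≤ L * ‖x - y‖) (x d : E) :
    f (x + d) ≤ f x + inner ℝ (gradient f x) d + L / 2 * ‖d‖ ^ 2 := by
  have hd : ∀ t : ℝ, HasDerivAt
      (fun s : ℝ => f (x + s • d) - s * inner ℝ (gradient f x) d - L / 2 * ‖d‖ ^ 2 * s ^ 2)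
      (inner ℝ (gradient f (x + t • d)) d - inner ℝ (gradient f x) d - L * ‖d‖ ^ 2 * t) t := by
    intro t
    have h1 := line_deriv f hdiff x d t
    have h2 := (hasDerivAt_id t).mul_const (inner ℝ (gradient f x) d)
    have h3 := ((hasDerivAt_id t).pow 2).const_mul (L / 2 * ‖d‖ ^ 2)
    refine ((h1.sub h2).sub h3).congr_deriv ?_
    simp
    ring
  have hanti : AntitoneOn
      (fun s : ℝ => f (x + s • d) - s * inner ℝ (gradient f x) d - L / 2 * ‖d‖ ^ 2 * s ^ 2)
      (Set.Icc 0 1) := by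
    apply antitoneOn_of_deriv_nonpos (convex_Icc 0 1)
    · exact fun t _ => (hd t).continuousAt.continuousWithinAt
    · exact fun t _ => (hd t).differentiableAt.differentiableWithinAt
    · intro t ht
      rw [interior_Icc] at ht
      rw [(hd t).deriv, ← inner_sub_left]
      have h1 := real_inner_le_norm (gradient f (x + t • d) - gradient f x) d
      have h2 := hlip (x + t • d) x
      rw [add_sub_cancel_left, norm_smul, Real.norm_of_nonneg ht.1.le] at h2
      have h3 := mul_le_mul_of_nonneg_right h2 (norm_nonneg d)
      nlinarith
  have := hanti (Set.left_mem_Icc.2 zero_le_one) (Set.right_mem_Icc.2 zero_le_one) zero_le_one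
  simp at this ⊢
  linarith

lemma first_order (f : E → ℝ) (hdiff : Differentiable ℝ f) (hconv : ConvexOn ℝ Set.univ f)
    (x y : E) : f x + inner ℝ (gradient f x) (y - x) ≤ f y := by
  have hc : ConvexOn ℝ Set.univ (fun s : ℝ => f (x + s • (y - x))) := by
    refine ⟨convex_univ, fun s _ t _ a b ha hb hab => ?_⟩
    have h := hconv.2 (Set.mem_univ (x + s • (y - x))) (Set.mem_univ (x + t • (y - x))) ha hb hab
    convert h using 2
    have : x = (a + b) • x := by rw [hab, one_smul]
    simp only [smul_eq_mul]
    nth_rw 1 [this]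
    module
  have h := line_deriv f hdiff x (y - x) 0
  have h2 := hc.le_slope_of_hasDerivAt (Set.mem_univ 0) (Set.mem_univ 1) zero_lt_one h
  simp [slope_def_field] at h2 ⊢
  linarith

lemma interp (L : ℝ) (hL : 0 < L) (f : E → ℝ) (hdiff : Differentiable ℝ f)
    (hconv : ConvexOn ℝ Set.univ f)
    (hlip : ∀ x y, ‖gradient f x - gradient f y‖ ≤ L * ‖x - y‖) (x y : E) :
    f y + inner ℝ (gradient f y) (x - y) + 1 / (2 * L) * ‖gradient f x - gradient f y‖ ^ 2
      ≤ f x := by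
  have h1 := descent L f hdiff hlip x (-(1 / L) • (gradient f x - gradient f y))
  have h2 := first_order f hdiff hconv y (x + -(1 / L) • (gradient f x - gradient f y))
  rw [norm_smul, mul_pow, Real.norm_eq_abs, sq_abs] at h1
  rw [← real_inner_self_eq_norm_sq] at *
  simp only [inner_add_right, inner_sub_right, inner_sub_left, inner_smul_right] at *
  rw [real_inner_comm (gradient f x) (gradient f y)] at *
  have h3 := h2.trans h1
  generalize inner ℝ (gradient f x) (gradient f x) = A at *
  generalize inner ℝ (gradient f x) (gradient f y) = B at *
  generalize inner ℝ (gradient f y) (gradient f y) = C at *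
  have e : L / 2 * ((-(1 / L)) ^ 2 * (A - B - (B - C))) = 1 / (2 * L) * (A - B - (B - C)) := by
    field_simp
  have e2 : 1 / L = 2 * (1 / (2 * L)) := by field_simp
  rw [e, e2] at h3
  linarith

lemma step (L m : ℝ) (hL : 0 < L) (hm : 0 < m) (q p G v v' xn xn' xN : E)
    (fn fn' fN : ℝ)
    (hv : v' = v + (12 / (L * m * (m + 1) * (m + 2))) • q)
    (hx : xn' = xn - (1 / L) • q - ((m - 1) * m * (m + 1) / 6) • v')
    (h1 : fn' + inner ℝ p (xn - xn') + 1 / (2 * L) * ‖q - p‖ ^ 2 ≤ fn)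
    (h2 : fn + inner ℝ q (xN - xn) + 1 / (2 * L) * ‖G - q‖ ^ 2 ≤ fN) :
    L * (6 / (m * (m + 1))) * (fn' - fN) + L ^ 2 * inner ℝ v' (xN - xn')
        + 6 / (m * (m + 1) * (m + 2)) * ‖q‖ ^ 2
        + 6 / (m * (m + 1)) / 2 * (‖p‖ ^ 2 + ‖G‖ ^ 2)
        - L * inner ℝ G v' + (m - 1) * L * inner ℝ p v'
        + (m - 2) * (m - 1) * m * (m + 1) / 24 * L ^ 2 * ‖v'‖ ^ 2
      ≤ L * (6 / ((m + 1) * (m + 2))) * (fn - fN) + L ^ 2 * inner ℝ v (xN - xn)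
        + 6 / ((m + 1) * (m + 2)) / 2 * (‖q‖ ^ 2 + ‖G‖ ^ 2)
        - L * inner ℝ G v + m * L * inner ℝ q v
        + (m - 1) * m * (m + 1) * (m + 2) / 24 * L ^ 2 * ‖v‖ ^ 2 := by
  have k1 := mul_le_mul_of_nonneg_left h1 (show 0 ≤ L * (6 / (m * (m + 1))) by positivity)
  have k2 := mul_le_mul_of_nonneg_left h2
    (show 0 ≤ L * (12 / (m * (m + 1) * (m + 2))) by positivity)
  clear h1 h2
  obtain ⟨y, rfl⟩ : ∃ y, xN = xn + y := ⟨xN - xn, by abel⟩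
  have e1 : xn - xn' = (1 / L) • q + ((m - 1) * m * (m + 1) / 6) • v' := by rw [hx]; abel
  have e2 : xn + y - xn' = y + (1 / L) • q + ((m - 1) * m * (m + 1) / 6) • v' := by rw [hx]; abel
  rw [e1] at k1
  rw [e2]
  rw [add_sub_cancel_left] at *
  clear e1 e2 hx
  subst hv
  simp only [← real_inner_self_eq_norm_sq, inner_add_right, inner_sub_right, inner_sub_left,
    inner_add_left, inner_smul_right, real_inner_smul_left] at *
  rw [real_inner_comm p q, real_inner_comm q G, real_inner_comm v q] at *
  generalize inner ℝ p q = pq at *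
  generalize inner ℝ q G = qG at *
  generalize inner ℝ v q = vq at *
  generalize inner ℝ q q = qq at *
  generalize inner ℝ p p = pp at *
  generalize inner ℝ G G = GG at *
  generalize inner ℝ v v = vv at *
  generalize inner ℝ p v = pv at *
  generalize inner ℝ q y = qy at *
  generalize inner ℝ v y = vy at *
  generalize inner ℝ G v = Gv at *
  rw [← sub_nonneg] at *
  have k := add_nonneg k1 k2
  refine k.trans_eq ?_
  have hm1 : m + 1 ≠ 0 := by positivity
  have hm2 : m + 2 ≠ 0 := by positivity
  field_simp
  ring

end helpers

theorem stmt_8 {d : ℕ} (L : ℝ) (hL : 0 < L) (N : ℕ)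
    (f : EuclideanSpace ℝ (Fin d) → ℝ)
    (hdiff : Differentiable ℝ f) (hconv : ConvexOn ℝ Set.univ f)
    (hlip : ∀ x y, ‖gradient f x - gradient f y‖ ≤ L * ‖x - y‖)
    (xs : EuclideanSpace ℝ (Fin d)) (hmin : ∀ y, f xs ≤ f y)
    (x v : ℕ → EuclideanSpace ℝ (Fin d)) (hv0 : v 0 = 0)
    (hv : ∀ k < N, v (k + 1) = v k +
      (12 / (L * ((N : ℝ) - k + 1) * ((N : ℝ) - k + 2) * ((N : ℝ) - k + 3))) • gradient f (x k))
    (hx : ∀ k < N, x (k + 1) = x k - (1 / L) • gradient f (x k)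
        - (((N : ℝ) - k) * ((N : ℝ) - k + 1) * ((N : ℝ) - k + 2) / 6) • v (k + 1)) :
    ∑ k ∈ Finset.range (N + 1),
        12 / (((N : ℝ) - k + 1) * ((N : ℝ) - k + 2) * ((N : ℝ) - k + 3)) / 2 *
          ‖gradient f (x k)‖ ^ 2
      ≤ 12 * L * (f (x 0) - f xs) / (((N : ℝ) + 2) * ((N : ℝ) + 3)) := by
  
  set g := gradient f with hg
  have I := interp L hL f hdiff hconv hlip
  have gs : g xs = 0 := by
    have : fderiv ℝ f xs = 0 := IsLocalMin.fderiv_eq_zero (Filter.Eventually.of_forall hmin)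
    simp [hg, gradient, this]
  have P : ∀ n, n ≤ N →
      L * (6 / (((N : ℝ) - n + 2) * ((N : ℝ) - n + 3))) * (f (x n) - f (x N))
        + L ^ 2 * inner ℝ (v n) (x N - x n)
        + ∑ k ∈ Finset.range n, 12 / (((N : ℝ) - k + 1) * ((N : ℝ) - k + 2) * ((N : ℝ) - k + 3)) / 2
            * ‖g (x k)‖ ^ 2
        + 6 / (((N : ℝ) - n + 2) * ((N : ℝ) - n + 3)) / 2 * (‖g (x n)‖ ^ 2 + ‖g (x N)‖ ^ 2)
        - L * inner ℝ (g (x N)) (v n) + ((N : ℝ) - n + 1) * L * inner ℝ (g (x n)) (v n)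
        + ((N : ℝ) - n) * ((N : ℝ) - n + 1) * ((N : ℝ) - n + 2) * ((N : ℝ) - n + 3) / 24
          * L ^ 2 * ‖v n‖ ^ 2
      ≤ L * (6 / (((N : ℝ) + 2) * ((N : ℝ) + 3))) * (f (x 0) - f (x N))
        + 6 / (((N : ℝ) + 2) * ((N : ℝ) + 3)) / 2 * (‖g (x 0)‖ ^ 2 + ‖g (x N)‖ ^ 2) := by
    intro n
    induction n with
    | zero => intro _; simp [hv0]
    | succ n ih =>
      intro hn
      have hn' : n < N := hn
      have ih := ih hn'.le
      have hmn : (0 : ℝ) < (N : ℝ) - n := by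
        have : (n : ℝ) < N := by exact_mod_cast hn'
        linarith
      have S := step L ((N : ℝ) - n + 1) hL (by linarith) (g (x n)) (g (x (n+1))) (g (x N))
        (v n) (v (n+1)) (x n) (x (n+1)) (x N) (f (x n)) (f (x (n+1))) (f (x N))
        (by rw [hv n hn']; congr 3; ring) (by rw [hx n hn']; congr 3; ring) (I _ _) (I _ _)
      rw [Finset.sum_range_succ]
      push_cast
      have r0 : (N : ℝ) - (n + 1) = (N : ℝ) - n - 1 := by ring
      rw [r0]
      generalize (N : ℝ) - n = r at *
      have t1 : r - 1 + 2 = r + 1 := by ring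
      have t2 : r - 1 + 3 = r + 1 + 1 := by ring
      have t3 : r - 1 + 1 = r + 1 - 1 := by ring
      have t4 : r + 2 = r + 1 + 1 := by ring
      have t5 : r + 3 = r + 1 + 2 := by ring
      have t6 : r - 1 = r + 1 - 2 := by ring
      have t7 : r = r + 1 - 1 := by ring
      rw [t1, t2, t3, t6, t4, t5]
      rw [t4, t5] at ih
      have t8 : r * (r + 1) * (r + 1 + 1) * (r + 1 + 2) / 24
        = (r + 1 - 1) * (r + 1) * (r + 1 + 1) * (r + 1 + 2) / 24 := by ring
      rw [t8] at ih
      have t9 : 12 / ((r + 1) * (r + 1 + 1) * (r + 1 + 2)) / 2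
        = 6 / ((r + 1) * (r + 1 + 1) * (r + 1 + 2)) := by ring
      rw [t9]
      linarith
  have hN := P N le_rfl
  have J0 := I (x 0) xs
  have JN := I (x N) xs
  rw [Finset.sum_range_succ]
  have hA : (0 : ℝ) < 6 / (((N : ℝ) + 2) * ((N : ℝ) + 3)) := by positivity
  have eA : 12 * L * (f (x 0) - f xs) / (((N : ℝ) + 2) * ((N : ℝ) + 3))
      = 6 / (((N : ℝ) + 2) * ((N : ℝ) + 3)) * (2 * (L * (f (x 0) - f xs))) := by ring
  rw [eA]
  rw [← hg] at J0 JN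
  rw [gs] at J0 JN
  simp only [inner_zero_left, sub_zero, add_zero] at J0 JN
  have K0 : ‖g (x 0)‖ ^ 2 ≤ 2 * (L * (f (x 0) - f xs)) := by
    have := mul_le_mul_of_nonneg_left J0 (show 0 ≤ 2 * L by positivity)
    have e : 2 * L * (f xs + 1 / (2 * L) * ‖g (x 0)‖ ^ 2)
      = 2 * L * f xs + ‖g (x 0)‖ ^ 2 := by field_simp
    linarith
  have KN : ‖g (x N)‖ ^ 2 ≤ 2 * (L * (f (x N) - f xs)) := by
    have := mul_le_mul_of_nonneg_left JN (show 0 ≤ 2 * L by positivity)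
    have e : 2 * L * (f xs + 1 / (2 * L) * ‖g (x N)‖ ^ 2)
      = 2 * L * f xs + ‖g (x N)‖ ^ 2 := by field_simp
    linarith
  have M0 := mul_le_mul_of_nonneg_left K0 hA.le
  have MN := mul_le_mul_of_nonneg_left KN hA.le
  simp only [sub_self, zero_add, inner_zero_right, mul_zero, zero_mul, one_mul] at hN ⊢
  generalize 6 / (((N : ℝ) + 2) * ((N : ℝ) + 3)) = A at *
  norm_num at hN ⊢
  linarith
end
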